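/- arXiv:1008.0080 — 2 statements merged into one kernel-verified Lean document; each statement's English description precedes it below -/
import Mathlib

section
/- The intuitionistically valid formula (¬p ∨ ¬q) → ¬(p ∧ q), for distinct atoms p and q, is not N-valid. -/
/-! ## Dialogical logic: formulas, statements, moves -/

/-- Propositional formulas, built from atoms (indexed by `ℕ`) and `¬`, `∧`, `∨`, `→`. -/
inductive Formula : Type
  | atom : ℕ → Formula
  | neg : Formula → Formula
  | conj : Formula → Formula → Formula
  | disj : Formula → Formula → Formula
  | impl : Formula → Formula → Formula
  deriving DecidableEq, Inhabited

/-- Statements: formulas together with the three symbolic attacks `∧_L`, `∧_R` and `?`. -/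
inductive Statement : Type
  | form : Formula → Statement
  | conjL : Statement  -- the symbolic attack ∧_L
  | conjR : Statement  -- the symbolic attack ∧_R
  | question : Statement   -- the symbolic attack ?
  deriving DecidableEq, Inhabited

/-- A formula is atomic iff it is an atom. -/
def Formula.isAtomic : Formula → Prop
  | .atom _ => True
  | _ => False

/-- A move of a dialogue: a statement together with a reference.  The reference is
`none` for the initial move, `some (m, true)` for an attack on the assertion made at
move `m`, and `some (m, false)` for a defense against the attack made at move `m`. -/
structure Move : Type where
  stmt : Statement
  ref : Option (ℕ × Bool)
  deriving DecidableEq, Inhabited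

/-! ## Particle rules -/

/-- Particle rules, attacks: `Attacks a φ` holds when the statement `a` is an
admissible attack against the assertion `φ`. -/
inductive Attacks : Statement → Formula → Prop
  | conjL (φ ψ : Formula) : Attacks .conjL (.conj φ ψ)
  | conjR (φ ψ : Formula) : Attacks .conjR (.conj φ ψ)
  | disj (φ ψ : Formula) : Attacks .question (.disj φ ψ)
  | impl (φ ψ : Formula) : Attacks (.form φ) (.impl φ ψ)
  | neg (φ : Formula) : Attacks (.form φ) (.neg φ)

/-- Particle rules, defenses: `Defends s a φ` holds when the statement `s` is an
admissible defense of the assertion `φ` against the attack `a`.  (A negation admits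
no defense.) -/
inductive Defends : Statement → Statement → Formula → Prop
  | conjL (φ ψ : Formula) : Defends (.form φ) .conjL (.conj φ ψ)
  | conjR (φ ψ : Formula) : Defends (.form ψ) .conjR (.conj φ ψ)
  | disjL (φ ψ : Formula) : Defends (.form φ) .question (.disj φ ψ)
  | disjR (φ ψ : Formula) : Defends (.form ψ) .question (.disj φ ψ)
  | impl (φ ψ : Formula) : Defends (.form ψ) (.form φ) (.impl φ ψ)

/-! ## Dialogues

A (finite stage of a) dialogue is modelled as a list of moves; the move at index `i`
is the `i`-th move, made by Proponent P if `i` is even and by Opponent O if `i` is odd. -/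

/-- The skeletal dialogue conditions: move 0 is an assertion of a formula with no
reference, and every later move is an attack on, or a defense against, a specified
earlier move of the other player, in accordance with the particle rules; only
non-atomic assertions may be attacked. -/
def IsDialogue (d : List Move) : Prop :=
  (∀ _ : 0 < d.length, d[0]!.ref = none ∧ ∃ φ : Formula, d[0]!.stmt = .form φ) ∧
  (∀ i : ℕ, 0 < i → i < d.length →
    ∃ (m : ℕ) (z : Bool), d[i]!.ref = some (m, z) ∧ m < i ∧ m % 2 ≠ i % 2 ∧
      (z = true →
        ∃ φ : Formula, d[m]!.stmt = .form φ ∧ ¬ φ.isAtomic ∧ Attacks d[i]!.stmt φ) ∧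
      (z = false →
        ∃ (k : ℕ) (φ : Formula), d[m]!.ref = some (k, true) ∧ k < m ∧
          d[k]!.stmt = .form φ ∧ Defends d[i]!.stmt d[m]!.stmt φ))

/-- Rule D10: P may assert an atomic formula only if O has asserted it earlier. -/
def RuleD10 (d : List Move) : Prop :=
  ∀ i < d.length, i % 2 = 0 → ∀ a : ℕ, d[i]!.stmt = .form (.atom a) →
    ∃ j < i, j % 2 = 1 ∧ d[j]!.stmt = .form (.atom a)

/-- Rule D13: each P-assertion may be attacked at most once. -/
def RuleD13 (d : List Move) : Prop :=
  ∀ m : ℕ, m % 2 = 0 → ∀ i < d.length, ∀ j < d.length,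
    d[i]!.ref = some (m, true) → d[j]!.ref = some (m, true) → i = j

/-- Rule E: O may only react (attack or defend) against the immediately preceding
P-move. -/
def RuleE (d : List Move) : Prop :=
  ∀ i < d.length, i % 2 = 1 → ∃ z : Bool, d[i]!.ref = some (i - 1, z)

/-- The rule set N = {D10, D13}. -/
def NRules (d : List Move) : Prop := RuleD10 d ∧ RuleD13 d

/-- The rule set CL = {D10, D13, E}. -/
def CLRules (d : List Move) : Prop := RuleD10 d ∧ RuleD13 d ∧ RuleE d

/-- A dialogue commences with `φ` when its initial move is P's assertion of `φ`. -/
def CommencesWith (φ : Formula) (d : List Move) : Prop :=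
  0 < d.length ∧ d[0]!.stmt = .form φ

/-- An `S`-dialogue for `φ` (for a rule set `S`): a dialogue commencing with `φ`
that obeys the structural rules `S`.  These are exactly the branches (identified
with their underlying move sequences) of the `S`-dialogue tree for `φ`. -/
def SDialogueFor (S : List Move → Prop) (φ : Formula) (d : List Move) : Prop :=
  IsDialogue d ∧ S d ∧ CommencesWith φ d

/-- P wins a finite `S`-dialogue for `φ`: it ends with a P-move (the last index,
`d.length - 1`, is even, i.e. `d.length` is odd) and it cannot be extended by any
legal further (O-)move. -/
def WinsFor (S : List Move → Prop) (φ : Formula) (d : List Move) : Prop :=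
  SDialogueFor S φ d ∧ d.length % 2 = 1 ∧ ∀ m : Move, ¬ SDialogueFor S φ (d ++ [m])

/-- An `S`-winning strategy for P for `φ`, modelled as a set `T` of `S`-dialogues for
`φ`: the nodes of a rooted subtree of the `S`-dialogue tree for `φ`, each node being
identified with the dialogue leading from the root to it.  The conditions state that
`T` is a nonempty, prefix-closed set of `S`-dialogues for `φ` (hence a rooted subtree
of the `S`-dialogue tree with the same root), that every branch of `T` is a finite
`S`-dialogue won by P (leaves are wins for P, and there is no infinite branch), that
every node at odd depth (an O-move) has exactly one child, and that every node at
even depth (a P-move) has the same children in `T` as in the full dialogue tree. -/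
structure IsWinningStrategy (S : List Move → Prop) (φ : Formula) (T : Set (List Move)) : Prop where
  nonempty : T.Nonempty
  dialogues : ∀ d ∈ T, SDialogueFor S φ d
  prefix_closed : ∀ d ∈ T, ∀ e : List Move, e <+: d → 0 < e.length → e ∈ T
  leaf_wins : ∀ d ∈ T, (∀ m : Move, d ++ [m] ∉ T) → WinsFor S φ d
  no_infinite_branch : ∀ f : ℕ → Move, ∃ n : ℕ, 0 < n ∧ (List.ofFn fun i : Fin n => f i) ∉ T
  odd_unique_child : ∀ d ∈ T, 0 < d.length → d.length % 2 = 0 → ∃! m : Move, d ++ [m] ∈ T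
  even_all_children : ∀ d ∈ T, d.length % 2 = 1 →
    ∀ m : Move, SDialogueFor S φ (d ++ [m]) → d ++ [m] ∈ T

/-- `φ` is `S`-valid iff P has an `S`-winning strategy for `φ`. -/
def SValid (S : List Move → Prop) (φ : Formula) : Prop :=
  ∃ T : Set (List Move), IsWinningStrategy S φ T

/-- `φ` is N-valid (`⊨_N φ`) iff P has an N-winning strategy for `φ`. -/
def NValid (φ : Formula) : Prop := SValid NRules φ

/-! Opponent may repeat a defense as often as he likes, so Proponent never wins once she has made an
attack that admits a defense, and only attacks on negations admit none.  So Opponent keeps attacking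
her last assertion, without ever conceding a negation, until she makes an attack: for
`(¬p ∨ ¬q) → ¬(p ∧ q)`, he concedes only `¬p ∨ ¬q` and `p ∧ q`, and the one defense he ever leaves
her is to assert `¬(p ∧ q)` again, which he can attack anew. -/

theorem getElem!_concat_of_lt {α : Type*} [Inhabited α] {l : List α} {i : ℕ} (h : i < l.length)
    (a : α) : (l ++ [a])[i]! = l[i]! := by
  simp [List.getElem!_eq_getElem?_getD, List.getElem?_append_left h]

theorem getElem!_concat_length {α : Type*} [Inhabited α] (l : List α) (a : α) :
    (l ++ [a])[l.length]! = a := by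
  simp

theorem Attacks.not_isAtomic {a : Statement} {φ : Formula} (h : Attacks a φ) : ¬ φ.isAtomic := by
  cases h <;> exact id

theorem Attacks.exists_defends {a : Statement} {φ : Formula} (h : Attacks a φ)
    (hφ : ∀ χ, φ ≠ .neg χ) : ∃ s, Defends s a φ := by
  cases h with
  | conjL φ ψ => exact ⟨_, .conjL φ ψ⟩
  | conjR φ ψ => exact ⟨_, .conjR φ ψ⟩
  | disj φ ψ => exact ⟨_, .disjL φ ψ⟩
  | impl φ ψ => exact ⟨_, .impl φ ψ⟩
  | neg φ => exact absurd rfl (hφ φ)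

theorem Defends.exists_eq_form {s a : Statement} {φ : Formula} (h : Defends s a φ) :
    ∃ ψ, s = .form ψ := by
  cases h <;> exact ⟨_, rfl⟩

/-- A formula is evasive if it can be attacked without asserting a negation, and every defense
against this attack is evasive again.  The induction allows Opponent to attack the successive
defenses of Proponent without ever conceding a negation or being faced with an atom. -/
inductive Evasive : Formula → Prop
  | of_attack {φ : Formula} {a : Statement} (attack : Attacks a φ)
      (ne_neg : ∀ χ, a ≠ .form (.neg χ)) (defense : ∀ ψ, Defends (.form ψ) a φ → Evasive ψ) :
      Evasive φ

theorem Evasive.neg {φ : Formula} (hφ : ∀ χ, φ ≠ .neg χ) : Evasive (.neg φ) :=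
  .of_attack (.neg φ) (fun χ h => hφ χ (Statement.form.inj h)) nofun

theorem Evasive.impl {φ ψ : Formula} (hφ : ∀ χ, φ ≠ .neg χ) (hψ : Evasive ψ) :
    Evasive (.impl φ ψ) :=
  .of_attack (.impl φ ψ) (fun χ h => hφ χ (Statement.form.inj h)) fun | _, .impl _ _ => hψ

/-! ### Extending dialogues -/

/-- The statement `s` is a defense against the attack made at move `m` of `d`: the condition that
`IsDialogue` imposes on defenses. -/
def IsDefenseAt (d : List Move) (s : Statement) (m : ℕ) : Prop :=
  ∃ (k : ℕ) (φ : Formula), d[m]!.ref = some (k, true) ∧ k < m ∧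
    d[k]!.stmt = .form φ ∧ Defends s d[m]!.stmt φ

theorem isDefenseAt_concat {d : List Move} {s : Statement} {m : ℕ} (hm : m < d.length)
    (x : Move) : IsDefenseAt (d ++ [x]) s m ↔ IsDefenseAt d s m := by
  unfold IsDefenseAt
  grind [getElem!_concat_of_lt]

theorem IsDefenseAt.exists_eq_form {d : List Move} {s : Statement} {m : ℕ}
    (h : IsDefenseAt d s m) : ∃ ψ, s = .form ψ := by
  obtain ⟨_, _, _, _, _, hs⟩ := h
  exact hs.exists_eq_form

namespace IsDialogue

variable {d : List Move} {m : ℕ}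

theorem lt_of_ref_eq (hd : IsDialogue d) {i : ℕ} (hi : i < d.length) {z : Bool}
    (href : d[i]!.ref = some (m, z)) : m < i := by
  obtain rfl | hpos := Nat.eq_zero_or_pos i
  · rw [(hd.1 hi).1] at href
    cases href
  · obtain ⟨n, w, hn, hlt, -⟩ := hd.2 i hpos hi
    grind

theorem ref_last_cases {x : Move} (hdx : IsDialogue (d ++ [x])) (hpos : 0 < d.length) :
    ∃ m < d.length, m % 2 ≠ d.length % 2 ∧
      ((x.ref = some (m, true) ∧ ∃ φ, d[m]!.stmt = .form φ ∧ Attacks x.stmt φ) ∨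
        IsDefenseAt d x.stmt m) := by
  obtain ⟨m, z, href, hm, hpar, hatt, hdef⟩ := hdx.2 d.length hpos (by simp)
  rw [getElem!_concat_length] at href hatt hdef
  refine ⟨m, hm, hpar, ?_⟩
  cases z with
  | true =>
    obtain ⟨φ, hφ, -, hx⟩ := hatt rfl
    exact .inl ⟨href, φ, by rwa [getElem!_concat_of_lt hm] at hφ, hx⟩
  | false => exact .inr ((isDefenseAt_concat hm x).1 (hdef rfl))

theorem concat (hd : IsDialogue d) {s : Statement} {z : Bool} (hm : m < d.length)
    (hpar : m % 2 ≠ d.length % 2)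
    (hatt : z = true → ∃ φ, d[m]!.stmt = .form φ ∧ Attacks s φ)
    (hdef : z = false → IsDefenseAt d s m) :
    IsDialogue (d ++ [⟨s, some (m, z)⟩]) := by
  have hpos : 0 < d.length := by omega
  refine ⟨fun _ => ?_, fun i hi hilt => ?_⟩
  · rw [getElem!_concat_of_lt hpos]
    exact hd.1 hpos
  obtain hlt | rfl : i < d.length ∨ i = d.length := by grind
  · obtain ⟨n, w, href, hni, hpar', hatt', hdef'⟩ := hd.2 i hi hlt
    have hn : n < d.length := hni.trans hlt
    refine ⟨n, w, ?_, hni, hpar', ?_, fun hw => ?_⟩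
    · rwa [getElem!_concat_of_lt hlt]
    · rwa [getElem!_concat_of_lt hlt, getElem!_concat_of_lt hn]
    · rw [getElem!_concat_of_lt hlt]
      exact (isDefenseAt_concat hn _).2 (hdef' hw)
  · rw [getElem!_concat_length]
    refine ⟨m, z, rfl, hm, hpar, fun hz => ?_, fun hz => (isDefenseAt_concat hm _).2 (hdef hz)⟩
    obtain ⟨φ, hφ, hs⟩ := hatt hz
    exact ⟨φ, by rwa [getElem!_concat_of_lt hm], hs.not_isAtomic, hs⟩

end IsDialogue

theorem RuleD10.concat_of_odd {d : List Move} (h : RuleD10 d) (hodd : d.length % 2 = 1)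
    (x : Move) : RuleD10 (d ++ [x]) := by
  intro i hi heven a ha
  have hlt : i < d.length := by grind
  rw [getElem!_concat_of_lt hlt] at ha
  obtain ⟨j, hji, hj⟩ := h i hlt heven a ha
  exact ⟨j, hji, by rwa [getElem!_concat_of_lt (hji.trans hlt)]⟩

theorem RuleD13.concat {d : List Move} (h : RuleD13 d) {x : Move}
    (hx : ∀ m, x.ref = some (m, true) → ∀ i < d.length, d[i]!.ref ≠ some (m, true)) :
    RuleD13 (d ++ [x]) := by
  unfold RuleD13 at *
  grind [getElem!_concat_of_lt, getElem!_concat_length]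

namespace SDialogueFor

variable {φ : Formula} {d : List Move} {s : Statement} {m : ℕ}

theorem concat_of_odd (hd : SDialogueFor NRules φ d) (hodd : d.length % 2 = 1) {x : Move}
    (hdx : IsDialogue (d ++ [x]))
    (hx : ∀ m, x.ref = some (m, true) → ∀ i < d.length, d[i]!.ref ≠ some (m, true)) :
    SDialogueFor NRules φ (d ++ [x]) := by
  obtain ⟨-, ⟨hD10, hD13⟩, hpos, hφ⟩ := hd
  exact ⟨hdx, ⟨hD10.concat_of_odd hodd x, hD13.concat hx⟩, by simp,
    by rwa [getElem!_concat_of_lt hpos]⟩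

theorem concat_defense (hd : SDialogueFor NRules φ d) (hodd : d.length % 2 = 1)
    (hm : m < d.length) (heven : m % 2 = 0) (hs : IsDefenseAt d s m) :
    SDialogueFor NRules φ (d ++ [⟨s, some (m, false)⟩]) :=
  hd.concat_of_odd hodd (hd.1.concat hm (by omega) nofun fun _ => hs) nofun

theorem concat_attack_last (hd : SDialogueFor NRules φ d) (hodd : d.length % 2 = 1) {ψ : Formula}
    (hψ : d[d.length - 1]!.stmt = .form ψ) (hs : Attacks s ψ) :
    SDialogueFor NRules φ (d ++ [⟨s, some (d.length - 1, true)⟩]) := by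
  refine hd.concat_of_odd hodd
    (hd.1.concat (by omega) (by omega) (fun _ => ⟨ψ, hψ, hs⟩) nofun) fun m hm i hi href => ?_
  have hmi : m < i := hd.1.lt_of_ref_eq hi href
  grind

end SDialogueFor

/-! ### Winning strategies -/

theorem IsWinningStrategy.exists_maximal {S : List Move → Prop} {φ : Formula}
    {T : Set (List Move)} (hT : IsWinningStrategy S φ T) {G : List Move → Prop}
    {d₀ : List Move} (hd₀ : d₀ ∈ T) (hG : G d₀) :
    ∃ d ∈ T, G d ∧ ∀ m, d ++ [m] ∈ T → ¬ G (d ++ [m]) := by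
  by_contra! hext
  choose! next next_mem next_G using hext
  let D (n : ℕ) : List Move := (fun d => d ++ [next d])^[n] d₀
  have D_succ (n : ℕ) : D (n + 1) = D n ++ [next (D n)] := Function.iterate_succ_apply' ..
  have D_spec (n : ℕ) : D n ∈ T ∧ G (D n) := by
    induction n with
    | zero => exact ⟨hd₀, hG⟩
    | succ n ih => exact D_succ n ▸ ⟨next_mem _ ih.1 ih.2, next_G _ ih.1 ih.2⟩
  have D_length (n : ℕ) : (D n).length = d₀.length + n := by
    induction n with
    | zero => rfl
    | succ n ih => simp [D_succ, ih, add_assoc]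
  have D_prefix {i j : ℕ} (hij : i ≤ j) : D i <+: D j := by
    induction hij with
    | refl => exact List.prefix_rfl
    | step _ ih => exact ih.trans (D_succ _ ▸ List.prefix_append _ _)
  obtain ⟨n, hn, hnT⟩ := hT.no_infinite_branch fun i => (D (i + 1))[i]!
  have branch_eq_take : (List.ofFn fun i : Fin n => (D (i + 1))[(i : ℕ)]!) = (D n).take n := by
    refine List.ext_getElem (by simp [D_length]) fun i hi _ => ?_
    have hin : i < n := by simpa using hi
    have hi' : i < (D (i + 1)).length := by grind
    simp only [List.getElem_ofFn, List.getElem_take]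
    rw [getElem!_pos _ i hi', (D_prefix (Nat.succ_le_of_lt hin)).getElem hi']
  rw [branch_eq_take] at hnT
  exact hnT (hT.prefix_closed _ (D_spec n).1 _ (List.take_prefix _ _) (by grind))

theorem not_SValid_of_invariant {S : List Move → Prop} {φ : Formula} (G : List Move → Prop)
    (root : ∀ r : Move, r.stmt = .form φ → G [r])
    (proponent : ∀ d x, IsDialogue (d ++ [x]) → 0 < d.length → d.length % 2 = 0 → G d →
      G (d ++ [x]))
    (opponent : ∀ d, SDialogueFor S φ d → d.length % 2 = 1 → G d →
      ∃ x, SDialogueFor S φ (d ++ [x]) ∧ G (d ++ [x])) : ¬ SValid S φ := by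
  rintro ⟨T, hT⟩
  obtain ⟨r, hrT, hr⟩ : ∃ r : Move, [r] ∈ T ∧ r.stmt = .form φ := by
    obtain ⟨d, hdT⟩ := hT.nonempty
    obtain ⟨-, -, hpos, hφ⟩ := hT.dialogues d hdT
    obtain ⟨r, t, rfl⟩ := List.exists_cons_of_length_pos hpos
    exact ⟨r, hT.prefix_closed _ hdT _ (by simp) (by simp), hφ⟩
  obtain ⟨d, hdT, hG, hmax⟩ := hT.exists_maximal hrT (root r hr)
  have hd := hT.dialogues d hdT
  obtain heven | hodd := Nat.mod_two_eq_zero_or_one d.length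
  · obtain ⟨x, hxT, -⟩ := hT.odd_unique_child d hdT hd.2.2.1 heven
    exact hmax x hxT (proponent d x (hT.dialogues _ hxT).1 hd.2.2.1 heven hG)
  · obtain ⟨x, hx, hGx⟩ := opponent d hd hodd hG
    exact hmax x (hT.even_all_children d hdT hodd x hx) hGx

/-! ### Opponent's counter-strategy -/

/-- Some attack by Proponent in `d` admits a defense.  Nothing in the rule set `N` prevents Opponent
from repeating this defense. -/
def OpponentCanDefend (d : List Move) : Prop :=
  ∃ m < d.length, m % 2 = 0 ∧ ∃ s, IsDefenseAt d s m

theorem OpponentCanDefend.concat {d : List Move} (h : OpponentCanDefend d) (x : Move) :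
    OpponentCanDefend (d ++ [x]) := by
  obtain ⟨m, hm, heven, s, hs⟩ := h
  exact ⟨m, by grind, heven, s, (isDefenseAt_concat hm x).2 hs⟩

theorem OpponentCanDefend.exists_concat {φ : Formula} {d : List Move} (h : OpponentCanDefend d)
    (hd : SDialogueFor NRules φ d) (hodd : d.length % 2 = 1) :
    ∃ x, SDialogueFor NRules φ (d ++ [x]) ∧ OpponentCanDefend (d ++ [x]) := by
  obtain ⟨m, hm, heven, s, hs⟩ := id h
  exact ⟨_, hd.concat_defense hodd hm heven hs, h.concat _⟩

/-- The dialogue `d` is one in which Proponent has only asserted evasive formulas, and Opponent has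
neither asserted a negation nor admitted a defense by a formula that is not evasive. -/
structure Evading (d : List Move) : Prop where
  proponent : ∀ i < d.length, i % 2 = 0 → ∃ φ, d[i]!.stmt = .form φ ∧ Evasive φ
  opponent_ne_neg : ∀ i < d.length, i % 2 = 1 → ∀ χ, d[i]!.stmt ≠ .form (.neg χ)
  opponent_defense : ∀ i < d.length, i % 2 = 1 → ∀ ψ, IsDefenseAt d (.form ψ) i → Evasive ψ

namespace Evading

variable {d : List Move}

theorem singleton {r : Move} {φ : Formula} (hr : r.stmt = .form φ) (hφ : Evasive φ) :
    Evading [r] where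
  proponent i hi _ := by
    obtain rfl : i = 0 := by simpa using hi
    exact ⟨φ, hr, hφ⟩
  opponent_ne_neg := by grind
  opponent_defense := by grind

theorem concat (h : Evading d) {x : Move}
    (hP : d.length % 2 = 0 → ∃ φ, x.stmt = .form φ ∧ Evasive φ)
    (hO : d.length % 2 = 1 → (∀ χ, x.stmt ≠ .form (.neg χ)) ∧
      ∀ ψ, IsDefenseAt (d ++ [x]) (.form ψ) d.length → Evasive ψ) :
    Evading (d ++ [x]) := by
  have lt_or_eq {i : ℕ} (hi : i < (d ++ [x]).length) : i < d.length ∨ i = d.length := by grind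
  refine ⟨fun i hi hpar => ?_, fun i hi hpar => ?_, fun i hi hpar => ?_⟩ <;>
    obtain hlt | rfl := lt_or_eq hi
  · exact getElem!_concat_of_lt hlt x ▸ h.proponent i hlt hpar
  · exact (getElem!_concat_length d x).symm ▸ hP hpar
  · exact getElem!_concat_of_lt hlt x ▸ h.opponent_ne_neg i hlt hpar
  · exact (getElem!_concat_length d x).symm ▸ (hO hpar).1
  · exact fun ψ hψ => h.opponent_defense i hlt hpar ψ ((isDefenseAt_concat hlt x).1 hψ)
  · exact (hO hpar).2

theorem concat_proponent (h : Evading d) {x : Move} (hdx : IsDialogue (d ++ [x]))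
    (hpos : 0 < d.length) (heven : d.length % 2 = 0) :
    OpponentCanDefend (d ++ [x]) ∨ Evading (d ++ [x]) := by
  obtain ⟨m, hm, hpar, ⟨href, φ, hφ, hatt⟩ | hdef⟩ := hdx.ref_last_cases hpos
  · have φ_ne_neg : ∀ χ, φ ≠ .neg χ := by
      rintro χ rfl
      exact h.opponent_ne_neg m hm (by omega) χ hφ
    obtain ⟨s, hs⟩ := hatt.exists_defends φ_ne_neg
    refine .inl ⟨d.length, by simp, heven, s, m, φ, ?_, hm, ?_, ?_⟩
    · rwa [getElem!_concat_length]
    · rwa [getElem!_concat_of_lt hm]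
    · rwa [getElem!_concat_length]
  · obtain ⟨ψ, hψ⟩ := hdef.exists_eq_form
    have ψ_evasive : Evasive ψ := h.opponent_defense m hm (by omega) ψ (hψ ▸ hdef)
    exact .inr (h.concat (fun _ => ⟨ψ, hψ, ψ_evasive⟩) (by omega))

theorem exists_concat_opponent (h : Evading d) {φ : Formula} (hd : SDialogueFor NRules φ d)
    (hodd : d.length % 2 = 1) : ∃ x, SDialogueFor NRules φ (d ++ [x]) ∧ Evading (d ++ [x]) := by
  have hlast : d.length - 1 < d.length := by omega
  obtain ⟨ψ, hψ, @⟨_, a, ha, ha_ne_neg, ha_defense⟩⟩ := h.proponent _ hlast (by omega)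
  refine ⟨_, hd.concat_attack_last hodd hψ ha, h.concat (by omega) fun _ => ⟨ha_ne_neg, ?_⟩⟩
  rintro χ ⟨k, θ, href, hk, hθ, hχ⟩
  rw [getElem!_concat_length] at href hχ
  obtain rfl : d.length - 1 = k := by simpa using href
  obtain rfl : ψ = θ := by
    rw [getElem!_concat_of_lt hlast, hψ] at hθ
    exact Statement.form.inj hθ
  exact ha_defense χ hχ

end Evading

theorem de_morgan_converse_not_N_valid_general {φ : Formula} (hφ : Evasive φ) : ¬ NValid φ := by
  refine not_SValid_of_invariant (fun d => OpponentCanDefend d ∨ Evading d) ?_ ?_ ?_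
  · exact fun r hr => .inr (.singleton hr hφ)
  · rintro d x hdx hpos heven (h | h)
    · exact .inl (h.concat x)
    · exact h.concat_proponent hdx hpos heven
  · rintro d hd hodd (h | h)
    · exact (h.exists_concat hd hodd).imp fun _ => And.imp_right .inl
    · exact (h.exists_concat_opponent hd hodd).imp fun _ => And.imp_right .inr

/-- The intuitionistically valid formula
`(¬p ∨ ¬q) → ¬(p ∧ q)`, for distinct atoms `p` and `q`, is not N-valid. -/
theorem de_morgan_converse_not_N_valid (p q : ℕ) (hpq : p ≠ q) :
    ¬ NValid (Formula.impl
        (Formula.disj (Formula.neg (Formula.atom p)) (Formula.neg (Formula.atom q)))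
        (Formula.neg (Formula.conj (Formula.atom p) (Formula.atom q)))) := by
  exact de_morgan_converse_not_N_valid_general (.impl nofun (.neg nofun))
end

section
/- For all propositional formulas φ and ψ: the conjunction φ ∧ ψ is N-valid if and only if both φ is N-valid and ψ is N-valid. -/
/-!
Once O has attacked `φ ∧ ψ` by `∧_L`, rule D13 bars O from attacking it again, and P can only
assert `φ`; from there on the dialogue is one for `φ` with all indices shifted by two. A winning
strategy for `φ` can thus be played after the attack `∧_L`, and likewise one for `ψ` after `∧_R`.
The converse is more delicate, since D13 does not bind P's defenses: P may answer `∧_L` by `φ`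
repeatedly. In the dialogue for `φ` we let O react to each new copy of `φ` by the attack made on the
first one, and identify all copies. Positions of the two dialogues then correspond, and the strategy
for `φ ∧ ψ` yields one for `φ`.
-/

/-- The opening move of a dialogue: P asserts `φ`. -/
abbrev openingMove (φ : Formula) : Move := ⟨.form φ, none⟩

section Game

variable {S : List Move → Prop} {φ : Formula} {d : List Move} {m : Move} {F G : List Move → Move}

/-- P wins from the position `d` by answering every position `e` in which P is to move with `F e`.
Being inductive, the predicate includes that every play following `F` is finite. -/
inductive WinsFollowing (S : List Move → Prop) (φ : Formula) (F : List Move → Move) :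
    List Move → Prop
  | opponent {d : List Move} (hd : SDialogueFor S φ d) (hodd : d.length % 2 = 1)
      (h : ∀ m, SDialogueFor S φ (d ++ [m]) → WinsFollowing S φ F (d ++ [m])) :
      WinsFollowing S φ F d
  | proponent {d : List Move} (hd : SDialogueFor S φ d) (heven : d.length % 2 = 0)
      (h : WinsFollowing S φ F (d ++ [F d])) : WinsFollowing S φ F d

/-- P can force a win from the position `d`, whoever is to move there. -/
def PWins (S : List Move → Prop) (φ : Formula) (d : List Move) : Prop :=
  ∃ F, WinsFollowing S φ F d

theorem WinsFollowing.sDialogueFor (h : WinsFollowing S φ F d) : SDialogueFor S φ d := by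
  cases h <;> assumption

theorem WinsFollowing.congr (h : WinsFollowing S φ F d) (hFG : ∀ e, d <+: e → F e = G e) :
    WinsFollowing S φ G d := by
  induction h with
  | opponent hd hodd _ ih =>
    exact .opponent hd hodd fun m hm ↦ ih m hm fun e he ↦ hFG e ((List.prefix_append ..).trans he)
  | proponent hd heven _ ih =>
    refine .proponent hd heven ?_
    rw [← hFG _ List.prefix_rfl]
    exact ih fun e he ↦ hFG e ((List.prefix_append ..).trans he)

theorem PWins.of_append_singleton (hd : SDialogueFor S φ d) (heven : d.length % 2 = 0)
    (h : PWins S φ (d ++ [m])) : PWins S φ d := by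
  obtain ⟨F, hF⟩ := h
  refine ⟨Function.update F d m, .proponent hd heven ?_⟩
  rw [Function.update_self]
  refine hF.congr fun e he ↦ (Function.update_of_ne ?_ m F).symm
  rintro rfl
  simpa using he.length_le

theorem PWins.of_forall_append_singleton (hd : SDialogueFor S φ d) (hodd : d.length % 2 = 1)
    (h : ∀ m, SDialogueFor S φ (d ++ [m]) → PWins S φ (d ++ [m])) : PWins S φ d := by
  choose! F hF using h
  -- Move `d.length` of a later position tells which of the strategies `F m` is being followed.
  refine ⟨fun e ↦ F e[d.length]! e, .opponent hd hodd fun m hm ↦ (hF m hm).congr ?_⟩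
  rintro _ ⟨t, rfl⟩
  simp

/-- The positions that can occur in a dialogue for `φ` in which P follows `F`. -/
inductive Reachable (S : List Move → Prop) (φ : Formula) (F : List Move → Move) :
    List Move → Prop
  | opening : Reachable S φ F [openingMove φ]
  | opponent {d : List Move} {m : Move} (hd : Reachable S φ F d) (hodd : d.length % 2 = 1)
      (hm : SDialogueFor S φ (d ++ [m])) : Reachable S φ F (d ++ [m])
  | proponent {d : List Move} (hd : Reachable S φ F d) (heven : d.length % 2 = 0) :
      Reachable S φ F (d ++ [F d])

theorem Reachable.winsFollowing (hF : WinsFollowing S φ F [openingMove φ])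
    (h : Reachable S φ F d) : WinsFollowing S φ F d := by
  induction h with
  | opening => exact hF
  | opponent _ hodd hm ih =>
    cases ih with
    | opponent _ _ h => exact h _ hm
    | proponent _ heven _ => lia
  | proponent _ heven ih =>
    cases ih with
    | opponent _ hodd _ => lia
    | proponent _ _ h => exact h

theorem Reachable.eq_of_even (h : Reachable S φ F (d ++ [m])) (hpos : 0 < d.length)
    (heven : d.length % 2 = 0) : m = F d := by
  generalize he : d ++ [m] = e at h
  cases h with
  | opening => simp_all [List.append_eq_singleton_iff]
  | opponent _ hodd _ => obtain ⟨rfl, -⟩ := List.append_inj' he rfl; lia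
  | proponent _ _ => obtain ⟨rfl, h⟩ := List.append_inj' he rfl; simpa using h

theorem Reachable.of_prefix (h : Reachable S φ F d) {e : List Move} (he : e <+: d)
    (hpos : 0 < e.length) : Reachable S φ F e := by
  induction h with
  | opening =>
    obtain rfl : e = [openingMove φ] :=
      he.eq_of_length (le_antisymm he.length_le hpos)
    exact .opening
  | opponent hd hodd hm ih =>
    rcases List.prefix_concat_iff.1 he with rfl | he
    exacts [.opponent hd hodd hm, ih he]
  | proponent hd heven ih =>
    rcases List.prefix_concat_iff.1 he with rfl | he
    exacts [.proponent hd heven, ih he]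

theorem SDialogueFor.eq_opening (h : SDialogueFor S φ [m]) : m = openingMove φ := by
  obtain ⟨⟨hopening, -⟩, -, -, hφ⟩ := h
  rw [openingMove, ← (hopening Nat.one_pos).1, ← hφ]
  rfl

theorem WinsFollowing.exists_not_reachable {n : ℕ} {f : ℕ → Move}
    (h : WinsFollowing S φ F (List.ofFn fun i : Fin n ↦ f i)) (hn : 0 < n)
    (hF : WinsFollowing S φ F [openingMove φ]) :
    ∃ n, 0 < n ∧ ¬ Reachable S φ F (List.ofFn fun i : Fin n ↦ f i) := by
  by_contra! hreach
  have ofFn_succ (n : ℕ) :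
      (List.ofFn fun i : Fin (n + 1) ↦ f i) = (List.ofFn fun i : Fin n ↦ f i) ++ [f n] := by
    rw [List.ofFn_succ_last]
    rfl
  generalize hd : (List.ofFn fun i : Fin n ↦ f i) = d at h
  induction h generalizing n with
  | opponent _ _ _ ih =>
    have hlegal := ((hreach (n + 1) n.succ_pos).winsFollowing hF).sDialogueFor
    rw [ofFn_succ, hd] at hlegal
    exact ih _ hlegal n.succ_pos (by rw [ofFn_succ, hd])
  | proponent _ heven _ ih =>
    have hreply := hreach (n + 1) n.succ_pos
    rw [ofFn_succ, hd] at hreply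
    have hfn := hreply.eq_of_even (by simpa [← hd] using hn) heven
    exact ih n.succ_pos (by rw [ofFn_succ, hd, hfn])

theorem Reachable.isWinningStrategy (hF : WinsFollowing S φ F [openingMove φ]) :
    IsWinningStrategy S φ {d | Reachable S φ F d} where
  nonempty := ⟨_, .opening⟩
  dialogues d hd := (hd.winsFollowing hF).sDialogueFor
  prefix_closed d hd e he hpos := hd.of_prefix he hpos
  leaf_wins d hd hleaf := by
    cases hd.winsFollowing hF with
    | opponent hdial hodd _ => exact ⟨hdial, hodd, fun m hm ↦ hleaf m (hd.opponent hodd hm)⟩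
    | proponent _ heven _ => exact (hleaf _ (hd.proponent heven)).elim
  no_infinite_branch f := by
    by_cases hone : Reachable S φ F (List.ofFn fun i : Fin 1 ↦ f i)
    · exact (hone.winsFollowing hF).exists_not_reachable Nat.one_pos hF
    · exact ⟨1, Nat.one_pos, hone⟩
  odd_unique_child d hd hpos heven :=
    ⟨F d, hd.proponent heven, fun m hm ↦ Reachable.eq_of_even hm hpos heven⟩
  even_all_children d hd hodd m hm := hd.opponent hodd hm

theorem wellFounded_of_no_infinite_branch {α : Type*} [Inhabited α] {T : Set (List α)}
    (prefix_closed : ∀ d ∈ T, ∀ e : List α, e <+: d → 0 < e.length → e ∈ T)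
    (no_infinite_branch : ∀ f : ℕ → α, ∃ n, 0 < n ∧ (List.ofFn fun i : Fin n ↦ f i) ∉ T) :
    WellFounded fun e d : List α ↦ e ∈ T ∧ ∃ a, e = d ++ [a] := by
  rw [wellFounded_iff_isEmpty_descending_chain]
  refine ⟨fun ⟨f, hf⟩ ↦ ?_⟩
  have hlen (n : ℕ) : n ≤ (f n).length := by
    induction n with
    | zero => exact Nat.zero_le _
    | succ n ih =>
      obtain ⟨a, ha⟩ := (hf n).2
      rw [ha, List.length_append, List.length_singleton]
      lia
  have hprefix {m n : ℕ} (hmn : m ≤ n) : f m <+: f n := by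
    induction n, hmn using Nat.le_induction with
    | base => exact List.prefix_rfl
    | succ n _ ih =>
      obtain ⟨a, ha⟩ := (hf n).2
      exact ih.trans (ha ▸ List.prefix_append ..)
  obtain ⟨n, hpos, hn⟩ := no_infinite_branch fun i ↦ (f (i + 1))[i]!
  refine hn (prefix_closed (f (n + 1)) (hf n).1 _ ?_ (by simpa using hpos))
  rw [List.prefix_iff_getElem]
  refine ⟨by simpa using (hlen (n + 1)).trans' n.le_succ, fun i hi ↦ ?_⟩
  rw [List.length_ofFn] at hi
  rw [List.getElem_ofFn, getElem!_pos _ i (hlen (i + 1))]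
  exact (hprefix (show i + 1 ≤ n + 1 by lia)).getElem (hlen (i + 1))

theorem IsWinningStrategy.pWins {T : Set (List Move)} (hT : IsWinningStrategy S φ T)
    (hd : d ∈ T) : PWins S φ d := by
  have hwf := wellFounded_of_no_infinite_branch hT.prefix_closed hT.no_infinite_branch
  induction d using hwf.induction with
  | _ d ih =>
    have hdial := hT.dialogues d hd
    rcases Nat.mod_two_eq_zero_or_one d.length with heven | hodd
    · obtain ⟨m, hm, -⟩ := hT.odd_unique_child d hd hdial.2.2.1 heven
      exact .of_append_singleton hdial heven (ih _ ⟨hm, m, rfl⟩ hm)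
    · refine .of_forall_append_singleton hdial hodd fun m hm ↦ ?_
      have hmT := hT.even_all_children d hd hodd m hm
      exact ih _ ⟨hmT, m, rfl⟩ hmT

theorem IsWinningStrategy.opening_mem {T : Set (List Move)} (hT : IsWinningStrategy S φ T) :
    [openingMove φ] ∈ T := by
  obtain ⟨d, hd⟩ := hT.nonempty
  obtain ⟨m, t, rfl⟩ := List.exists_cons_of_length_pos (hT.dialogues d hd).2.2.1
  have hm : [m] ∈ T := hT.prefix_closed _ hd [m] (by simp) Nat.one_pos
  rwa [(hT.dialogues _ hm).eq_opening] at hm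

theorem sValid_iff_pWins : SValid S φ ↔ PWins S φ [openingMove φ] :=
  ⟨fun ⟨_, hT⟩ ↦ hT.pWins hT.opening_mem, fun ⟨_, hF⟩ ↦ ⟨_, Reachable.isWinningStrategy hF⟩⟩

end Game

section Append

variable {d : List Move} {m : Move}

theorem getElem!_append_singleton_of_lt {i : ℕ} (hi : i < d.length) :
    (d ++ [m])[i]! = d[i]! := by
  grind

theorem getElem!_append_singleton_length : (d ++ [m])[d.length]! = m := by
  grind

theorem ruleD10_append_singleton_iff :
    RuleD10 (d ++ [m]) ↔ RuleD10 d ∧ (d.length % 2 = 0 → ∀ a : ℕ, m.stmt = .form (.atom a) →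
      ∃ j < d.length, j % 2 = 1 ∧ d[j]!.stmt = .form (.atom a)) := by
  have asserted_before {i : ℕ} (hi : i ≤ d.length) (a : ℕ) :
      (∃ j < i, j % 2 = 1 ∧ (d ++ [m])[j]!.stmt = .form (.atom a)) ↔
        ∃ j < i, j % 2 = 1 ∧ d[j]!.stmt = .form (.atom a) :=
    exists_congr fun j ↦ and_congr_right fun hj ↦ by
      rw [getElem!_append_singleton_of_lt (hj.trans_le hi)]
  simp only [RuleD10, List.length_append, List.length_singleton, Nat.forall_lt_succ_right,
    getElem!_append_singleton_length, asserted_before le_rfl]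
  refine and_congr_left fun _ ↦ forall₂_congr fun i hi ↦ ?_
  simp only [getElem!_append_singleton_of_lt hi, asserted_before hi.le]

theorem ruleD13_append_singleton_iff :
    RuleD13 (d ++ [m]) ↔ RuleD13 d ∧ ∀ k : ℕ, k % 2 = 0 → m.ref = some (k, true) →
      ∀ i < d.length, d[i]!.ref ≠ some (k, true) := by
  have hlen : (d ++ [m]).length = d.length + 1 := by simp
  constructor
  · intro h
    refine ⟨fun k hk i hi j hj hri hrj ↦ h k hk i (by lia) j (by lia) ?_ ?_,
      fun k hk hm i hi hr ↦ hi.ne (h k hk i (by lia) d.length (by lia) ?_ ?_)⟩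
    all_goals first
      | rwa [getElem!_append_singleton_of_lt ‹_›]
      | rwa [getElem!_append_singleton_length]
  · rintro ⟨hd, hnew⟩ k hk i hi j hj hri hrj
    rcases (Nat.lt_succ_iff_lt_or_eq.1 (hlen ▸ hi)) with hi | rfl <;>
      rcases (Nat.lt_succ_iff_lt_or_eq.1 (hlen ▸ hj)) with hj | rfl <;>
      simp only [getElem!_append_singleton_of_lt, getElem!_append_singleton_length, hi, hj]
        at hri hrj
    · exact hd k hk i hi j hj hri hrj
    · exact (hnew k hk hrj i hi hri).elim
    · exact (hnew k hk hri j hj hrj).elim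
    · rfl

end Append

/-- The particle rules for a single move: in the dialogue `d`, the statement `a` is an attack on
(`z = true`) or a defense against (`z = false`) move `k`. -/
inductive Responds (d : List Move) (a : Statement) (k : ℕ) : Bool → Prop
  | attack {φ : Formula} : d[k]!.stmt = .form φ → Attacks a φ → Responds d a k true
  | defense {k' : ℕ} {φ : Formula} : d[k]!.ref = some (k', true) → k' < k →
      d[k']!.stmt = .form φ → Defends a d[k]!.stmt φ → Responds d a k false

theorem responds_iff {d : List Move} {a : Statement} {k : ℕ} {z : Bool} :
    Responds d a k z ↔
      (z = true → ∃ φ : Formula, d[k]!.stmt = .form φ ∧ ¬ φ.isAtomic ∧ Attacks a φ) ∧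
      (z = false → ∃ (k' : ℕ) (φ : Formula), d[k]!.ref = some (k', true) ∧ k' < k ∧
        d[k']!.stmt = .form φ ∧ Defends a d[k]!.stmt φ) := by
  constructor
  · rintro (⟨hφ, ha⟩ | ⟨hr, hlt, hφ, hdef⟩)
    · exact ⟨fun _ ↦ ⟨_, hφ, ha.not_isAtomic, ha⟩, nofun⟩
    · exact ⟨nofun, fun _ ↦ ⟨_, _, hr, hlt, hφ, hdef⟩⟩
  · rintro ⟨hattack, hdefense⟩
    cases z
    · obtain ⟨k', φ, hr, hlt, hφ, hdef⟩ := hdefense rfl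
      exact .defense hr hlt hφ hdef
    · obtain ⟨φ, hφ, -, ha⟩ := hattack rfl
      exact .attack hφ ha

theorem responds_append_singleton_iff {d : List Move} {m : Move} {a : Statement} {k : ℕ} {z : Bool}
    (hk : k < d.length) : Responds (d ++ [m]) a k z ↔ Responds d a k z := by
  constructor
  · rintro (⟨hφ, ha⟩ | ⟨hr, hlt, hφ, hdef⟩) <;>
      rw [getElem!_append_singleton_of_lt hk] at *
    · exact .attack hφ ha
    · exact .defense hr hlt (by rwa [getElem!_append_singleton_of_lt (by lia)] at hφ) hdef
  · rintro (⟨hφ, ha⟩ | ⟨hr, hlt, hφ, hdef⟩) <;>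
      rw [← getElem!_append_singleton_of_lt (m := m) hk] at *
    · exact .attack hφ ha
    · exact .defense hr hlt (by rwa [getElem!_append_singleton_of_lt (by lia)]) hdef

theorem isDialogue_append_singleton_iff {d : List Move} {m : Move} (hd : 0 < d.length) :
    IsDialogue (d ++ [m]) ↔ IsDialogue d ∧ ∃ (k : ℕ) (z : Bool), m.ref = some (k, z) ∧
      k < d.length ∧ k % 2 ≠ d.length % 2 ∧ Responds d m.stmt k z := by
  have hstep {i : ℕ} (hi : i ≤ d.length) (x : Move) :
      (∃ (k : ℕ) (z : Bool), x.ref = some (k, z) ∧ k < i ∧ k % 2 ≠ i % 2 ∧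
        Responds (d ++ [m]) x.stmt k z) ↔
      ∃ (k : ℕ) (z : Bool), x.ref = some (k, z) ∧ k < i ∧ k % 2 ≠ i % 2 ∧
        Responds d x.stmt k z :=
    exists₂_congr fun k z ↦ and_congr_right fun _ ↦ and_congr_right fun hk ↦ by
      rw [responds_append_singleton_iff (hk.trans_le hi)]
  simp only [IsDialogue, ← responds_iff, and_assoc]
  refine and_congr (by simp [hd]) ?_
  simp only [forall_comm (α := 0 < _), List.length_append, List.length_singleton,
    Nat.forall_lt_succ_right, getElem!_append_singleton_length, hstep le_rfl, hd, forall_const]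
  refine and_congr_left fun _ ↦ forall₃_congr fun i hi _ ↦ ?_
  rw [getElem!_append_singleton_of_lt hi, hstep hi.le]

/-- The player to move may extend the dialogue `d` by the statement `a`, as an attack on
(`z = true`) or a defense against (`z = false`) move `k`, under the rule set N. -/
structure IsLegal (d : List Move) (a : Statement) (k : ℕ) (z : Bool) : Prop where
  lt : k < d.length
  parity : k % 2 ≠ d.length % 2
  responds : Responds d a k z
  d10 : d.length % 2 = 0 → ∀ p : ℕ, a = .form (.atom p) →
    ∃ j < d.length, j % 2 = 1 ∧ d[j]!.stmt = .form (.atom p)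
  d13 : k % 2 = 0 → z = true → ∀ i < d.length, d[i]!.ref ≠ some (k, true)

theorem sDialogueFor_append_singleton_iff {φ : Formula} {d : List Move} {m : Move}
    (hd : 0 < d.length) :
    SDialogueFor NRules φ (d ++ [m]) ↔ SDialogueFor NRules φ d ∧
      ∃ (a : Statement) (k : ℕ) (z : Bool), m = ⟨a, some (k, z)⟩ ∧ IsLegal d a k z := by
  have hcommences : CommencesWith φ (d ++ [m]) ↔ CommencesWith φ d := by
    simp [CommencesWith, hd]
  rw [SDialogueFor, SDialogueFor, NRules, NRules, isDialogue_append_singleton_iff hd,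
    ruleD10_append_singleton_iff, ruleD13_append_singleton_iff, hcommences]
  constructor
  · rintro ⟨⟨hdial, k, z, href, hlt, hpar, hresp⟩, ⟨⟨h10, h10'⟩, h13, h13'⟩, hφ⟩
    exact ⟨⟨hdial, ⟨h10, h13⟩, hφ⟩, m.stmt, k, z, by rw [← href], hlt, hpar, hresp, h10',
      fun hk hz ↦ h13' k hk (hz ▸ href)⟩
  · rintro ⟨⟨hdial, ⟨h10, h13⟩, hφ⟩, a, k, z, rfl, hlegal⟩
    refine ⟨⟨hdial, k, z, rfl, hlegal.lt, hlegal.parity, hlegal.responds⟩,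
      ⟨⟨h10, hlegal.d10⟩, h13, fun k' hk' href ↦ ?_⟩, hφ⟩
    obtain ⟨rfl, rfl⟩ : k = k' ∧ z = true := by simpa using href
    exact hlegal.d13 hk' rfl

section NDialogue

variable {φ : Formula} {d : List Move} {m : Move} {a : Statement} {k : ℕ} {z : Bool}

theorem SDialogueFor.append_of_isLegal (hd : SDialogueFor NRules φ d) (h : IsLegal d a k z) :
    SDialogueFor NRules φ (d ++ [⟨a, some (k, z)⟩]) :=
  (sDialogueFor_append_singleton_iff hd.2.2.1).2 ⟨hd, a, k, z, rfl, h⟩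

theorem SDialogueFor.exists_isLegal (h : SDialogueFor NRules φ (d ++ [m]))
    (hd : SDialogueFor NRules φ d) :
    ∃ (a : Statement) (k : ℕ) (z : Bool), m = ⟨a, some (k, z)⟩ ∧ IsLegal d a k z :=
  ((sDialogueFor_append_singleton_iff hd.2.2.1).1 h).2

theorem IsDialogue.ref_lt (hd : IsDialogue d) {i : ℕ} (hi : i < d.length)
    (href : d[i]!.ref = some (k, z)) : k < i := by
  rcases i.eq_zero_or_pos with rfl | hpos
  · cases (hd.1 hi).1.symm.trans href
  · obtain ⟨k', z', href', hlt, -⟩ := hd.2 i hpos hi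
    grind

theorem SDialogueFor.exists_opening_attack {S : List Move → Prop} (hd : SDialogueFor S φ d)
    (hlen : 1 < d.length) : ∃ a, d[1]! = ⟨a, some (0, true)⟩ ∧ Attacks a φ := by
  obtain ⟨k, z, href, hlt, -, hresp⟩ := hd.1.2 1 Nat.one_pos hlen
  obtain rfl : k = 0 := by lia
  refine ⟨d[1]!.stmt, ?_⟩
  rcases responds_iff.2 hresp with ⟨hφ, ha⟩ | ⟨-, hk', -⟩
  · obtain rfl := Statement.form.inj (hd.2.2.2.symm.trans hφ)
    exact ⟨by rw [← href], ha⟩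
  · exact absurd hk' (Nat.not_lt_zero _)

theorem sDialogueFor_opening_iff :
    SDialogueFor NRules φ [openingMove φ] ↔ ∀ p, φ ≠ .atom p := by
  constructor
  · rintro ⟨-, ⟨h10, -⟩, -⟩ p rfl
    obtain ⟨j, hj, -⟩ := h10 0 Nat.one_pos rfl p rfl
    exact absurd hj (Nat.not_lt_zero _)
  · intro hφ
    refine ⟨⟨fun _ ↦ ⟨rfl, φ, rfl⟩, ?_⟩, ⟨?_, ?_⟩, Nat.one_pos, rfl⟩
    · intro i hpos hi
      rw [List.length_singleton] at hi
      lia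
    · intro i hi _ p hp
      obtain rfl : i = 0 := by simpa using hi
      exact absurd (Statement.form.inj hp) (hφ p)
    · intro k _ i hi j hj _ _
      rw [List.length_singleton] at hi hj
      lia

theorem isLegal_opening_iff :
    IsLegal [openingMove φ] a k z ↔ k = 0 ∧ z = true ∧ Attacks a φ := by
  constructor
  · intro h
    obtain rfl : k = 0 := by simpa using h.lt
    rcases h.responds with ⟨hφ, ha⟩ | ⟨hr, -⟩
    · obtain rfl := Statement.form.inj hφ
      exact ⟨rfl, rfl, ha⟩
    · cases hr
  · rintro ⟨rfl, rfl, ha⟩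
    refine ⟨by simp, by simp, .attack rfl ha, by simp, fun _ _ i hi ↦ ?_⟩
    obtain rfl : i = 0 := by simpa using hi
    exact nofun

theorem sDialogueFor_opening_attack (ha : Attacks a φ) :
    SDialogueFor NRules φ [openingMove φ, ⟨a, some (0, true)⟩] := by
  have hφ : ∀ p, φ ≠ .atom p := by
    rintro p rfl
    cases ha
  exact (sDialogueFor_opening_iff.2 hφ).append_of_isLegal (isLegal_opening_iff.2 ⟨rfl, rfl, ha⟩)

theorem pWins_opening_iff (hφ : ∀ p, φ ≠ .atom p) :
    PWins NRules φ [openingMove φ] ↔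
      ∀ a, Attacks a φ → PWins NRules φ [openingMove φ, ⟨a, some (0, true)⟩] := by
  constructor
  · rintro ⟨F, ⟨-, -, h⟩ | ⟨-, heven, -⟩⟩ a ha
    · exact ⟨F, h _ (sDialogueFor_opening_attack ha)⟩
    · simp at heven
  · intro h
    have hd := sDialogueFor_opening_iff.2 hφ
    refine .of_forall_append_singleton hd (by simp) fun m hm ↦ ?_
    obtain ⟨a, k, z, rfl, hlegal⟩ := hm.exists_isLegal hd
    obtain ⟨rfl, rfl, ha⟩ := isLegal_opening_iff.1 hlegal
    exact h a ha

end NDialogue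

/-- `c` is a symbolic attack on `X` whose only defense is the assertion of `θ`: the situation
of the two attacks on a conjunction. -/
structure IsComponentAttack (c : Statement) (X θ : Formula) : Prop where
  symbolic : ∀ χ, c ≠ .form χ
  attacks : Attacks c X
  defends_iff : ∀ a, Defends a c X ↔ a = .form θ

theorem isComponentAttack_conjL (φ ψ : Formula) : IsComponentAttack .conjL (.conj φ ψ) φ where
  symbolic := nofun
  attacks := .conjL φ ψ
  defends_iff a := ⟨fun h ↦ by cases h; rfl, fun h ↦ h ▸ .conjL φ ψ⟩

theorem isComponentAttack_conjR (φ ψ : Formula) : IsComponentAttack .conjR (.conj φ ψ) ψ where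
  symbolic := nofun
  attacks := .conjR φ ψ
  defends_iff a := ⟨fun h ↦ by cases h; rfl, fun h ↦ h ▸ .conjR φ ψ⟩

/-- The dialogue `e` opens with the assertion of `X` and its attack `c`, and from then on plays the
dialogue `d`, where move `j` of `e` stands for move `s j` of `d`. Defenses against `c` all stand for
the opening move of `d`, so a move of `d` may have several copies in `e`. -/
structure Simulates (X : Formula) (c : Statement) (e d : List Move) (s : ℕ → ℕ) : Prop where
  opening : [openingMove X, ⟨c, some (0, true)⟩] <+: e
  lt : ∀ j, 2 ≤ j → j < e.length → s j < d.length
  parity : ∀ j, 2 ≤ j → j < e.length → s j % 2 = j % 2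
  stmt : ∀ j, 2 ≤ j → j < e.length → e[j]!.stmt = d[s j]!.stmt
  ref : ∀ j, 2 ≤ j → j < e.length → e[j]!.ref = some (1, false) ∧ s j = 0 ∨
    ∃ k z, 2 ≤ k ∧ k < j ∧ e[j]!.ref = some (k, z) ∧ d[s j]!.ref = some (s k, z)
  surj : ∀ i < d.length, ∃ j, 2 ≤ j ∧ j < e.length ∧ s j = i

namespace Simulates

variable {X θ : Formula} {c a : Statement} {e d : List Move} {s : ℕ → ℕ} {j k : ℕ} {z : Bool}

theorem two_le_length (h : Simulates X c e d s) : 2 ≤ e.length :=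
  h.opening.length_le

theorem move_zero (h : Simulates X c e d s) : e[0]! = openingMove X := by
  obtain ⟨t, rfl⟩ := h.opening
  rfl

theorem move_one (h : Simulates X c e d s) : e[1]! = ⟨c, some (0, true)⟩ := by
  obtain ⟨t, rfl⟩ := h.opening
  rfl

theorem nil (X : Formula) (c : Statement) (s : ℕ → ℕ) :
    Simulates X c [openingMove X, ⟨c, some (0, true)⟩] [] s where
  opening := List.prefix_rfl
  lt _ hj hj' := absurd hj' hj.not_gt
  parity _ hj hj' := absurd hj' hj.not_gt
  stmt _ hj hj' := absurd hj' hj.not_gt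
  ref _ hj hj' := absurd hj' hj.not_gt
  surj _ hi := absurd hi (Nat.not_lt_zero _)

theorem extend (h : Simulates X c e d s) {d' : List Move} (hd : d <+: d') {x : Move} {t : ℕ}
    (ht : t < d'.length) (hnew : ∀ i, d.length ≤ i → i < d'.length → i = t)
    (hparity : t % 2 = e.length % 2) (hstmt : x.stmt = d'[t]!.stmt)
    (href : x.ref = some (1, false) ∧ t = 0 ∨
      ∃ k z, 2 ≤ k ∧ k < e.length ∧ x.ref = some (k, z) ∧ d'[t]!.ref = some (s k, z)) :
    Simulates X c (e ++ [x]) d' (Function.update s e.length t) := by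
  have old {j : ℕ} (hj : j < e.length) : Function.update s e.length t j = s j :=
    Function.update_of_ne hj.ne t s
  have hget {i : ℕ} (hi : i < d.length) : d'[i]! = d[i]! := by
    obtain ⟨u, rfl⟩ := hd
    grind
  have hlen : (e ++ [x]).length = e.length + 1 := List.length_append
  have forall_le_iff (p : ℕ → Prop) : (∀ j, 2 ≤ j → j < (e ++ [x]).length → p j) ↔
      (∀ j, 2 ≤ j → j < e.length → p j) ∧ p e.length := by
    rw [hlen]
    simp only [forall_comm (α := 2 ≤ _), Nat.forall_lt_succ_right, h.two_le_length, forall_const]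
  constructor
  · exact h.opening.trans (List.prefix_append ..)
  · refine (forall_le_iff _).2 ⟨fun j hj hj' ↦ ?_, by rwa [Function.update_self]⟩
    exact old hj' ▸ (h.lt j hj hj').trans_le hd.length_le
  · refine (forall_le_iff _).2 ⟨fun j hj hj' ↦ ?_, by rwa [Function.update_self]⟩
    exact old hj' ▸ h.parity j hj hj'
  · refine (forall_le_iff _).2 ⟨fun j hj hj' ↦ ?_, ?_⟩
    · rw [getElem!_append_singleton_of_lt hj', old hj', hget (h.lt j hj hj'), h.stmt j hj hj']
    · rwa [getElem!_append_singleton_length, Function.update_self]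
  · refine (forall_le_iff _).2 ⟨fun j hj hj' ↦ ?_, ?_⟩
    · rw [getElem!_append_singleton_of_lt hj', old hj', hget (h.lt j hj hj')]
      refine (h.ref j hj hj').imp_right fun ⟨k, z, hk, hkj, hr⟩ ↦ ⟨k, z, hk, hkj, ?_⟩
      rwa [old (hkj.trans hj')]
    · rw [getElem!_append_singleton_length, Function.update_self]
      refine href.imp_right fun ⟨k, z, hk, hke, hr⟩ ↦ ⟨k, z, hk, hke, ?_⟩
      rwa [old hke]
  · intro i hi
    rcases lt_or_ge i d.length with hi' | hi'
    · obtain ⟨j, hj, hj', rfl⟩ := h.surj i hi'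
      exact ⟨j, hj, by lia, old hj'⟩
    · exact ⟨e.length, h.two_le_length, by lia, by rw [Function.update_self, hnew i hi' hi]⟩

theorem append_singleton (h : Simulates X c e d s) (hparity : e.length % 2 = d.length % 2)
    (hk : 2 ≤ k) (hke : k < e.length) (a : Statement) (z : Bool) :
    Simulates X c (e ++ [⟨a, some (k, z)⟩]) (d ++ [⟨a, some (s k, z)⟩])
      (Function.update s e.length d.length) := by
  refine h.extend (List.prefix_append ..) ?_ ?_ hparity.symm ?_ (.inr ⟨k, z, hk, hke, rfl, ?_⟩)
  · simp
  · intro i hi hi'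
    rw [List.length_append, List.length_singleton] at hi'
    lia
  all_goals rw [getElem!_append_singleton_length]

theorem isLegal_lift (h : Simulates X c e d s) (hparity : e.length % 2 = d.length % 2)
    (hj : 2 ≤ j) (hje : j < e.length) (hlegal : IsLegal d a (s j) z) : IsLegal e a j z where
  lt := hje
  parity := by
    have := hlegal.parity
    have := h.parity j hj hje
    lia
  responds := by
    rcases hlegal.responds with ⟨hφ, ha⟩ | ⟨hr, hlt, hφ, hdef⟩
    · exact .attack (h.stmt j hj hje ▸ hφ) ha
    · rcases h.ref j hj hje with ⟨-, hzero⟩ | ⟨k, z, hk, hkj, hre, hrd⟩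
      · lia
      · cases hrd.symm.trans hr
        rw [← h.stmt k hk (hkj.trans hje)] at hφ
        exact .defense hre hkj hφ (h.stmt j hj hje ▸ hdef)
  d10 heven p hp := by
    obtain ⟨i, hi, hiodd, hip⟩ := hlegal.d10 (hparity ▸ heven) p hp
    obtain ⟨l, hl, hle, rfl⟩ := h.surj i hi
    exact ⟨l, hle, h.parity l hl hle ▸ hiodd, (h.stmt l hl hle).trans hip⟩
  d13 heven hz i hi hr := by
    have hi2 : 2 ≤ i := by
      by_contra! hlt
      interval_cases i
      · simp [h.move_zero] at hr
      · rw [h.move_one] at hr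
        cases hr
        lia
    rcases h.ref i hi2 hi with ⟨hre, -⟩ | ⟨k, z', hk, hki, hre, hrd⟩
    · cases hre.symm.trans hr
    · cases hre.symm.trans hr
      exact hlegal.d13 (h.parity j hj hje ▸ heven) hz (s i) (h.lt i hi2 hi) hrd

theorem isLegal_project (h : Simulates X c e d s) (hparity : e.length % 2 = d.length % 2)
    (hc : ∀ χ, c ≠ .form χ) (hd : IsDialogue d) (hk : 2 ≤ k)
    (hinj : k % 2 = 0 → ∀ j, 2 ≤ j → j < e.length → s j = s k → j = k)
    (hlegal : IsLegal e a k z) : IsLegal d a (s k) z where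
  lt := h.lt k hk hlegal.lt
  parity := by
    have := hlegal.parity
    have := h.parity k hk hlegal.lt
    lia
  responds := by
    have hstmt := h.stmt k hk hlegal.lt
    rcases hlegal.responds with ⟨hφ, ha⟩ | ⟨hr, -, hφ, hdef⟩
    · exact .attack (hstmt ▸ hφ) ha
    · rcases h.ref k hk hlegal.lt with ⟨hre, -⟩ | ⟨l, z, hl, hlk, hre, hrd⟩
      · cases hre.symm.trans hr
      · cases hre.symm.trans hr
        rw [h.stmt _ hl (hlk.trans hlegal.lt)] at hφ
        exact .defense hrd (hd.ref_lt (h.lt k hk hlegal.lt) hrd) hφ (hstmt ▸ hdef)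
  d10 heven p hp := by
    obtain ⟨l, hle, hlodd, hlp⟩ := hlegal.d10 (hparity ▸ heven) p hp
    have hl : 2 ≤ l := by
      by_contra! hlt
      obtain rfl : l = 1 := by lia
      exact hc _ (by simpa [h.move_one] using hlp)
    exact ⟨s l, h.lt l hl hle, h.parity l hl hle ▸ hlodd, h.stmt l hl hle ▸ hlp⟩
  d13 heven hz i hi hr := by
    have hkeven : k % 2 = 0 := h.parity k hk hlegal.lt ▸ heven
    obtain ⟨l, hl, hle, rfl⟩ := h.surj i hi
    rcases h.ref l hl hle with ⟨-, hzero⟩ | ⟨k', z', hk', hkl, hre, hrd⟩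
    · exact absurd (hd.ref_lt hi hr) (by lia)
    · obtain ⟨hs, rfl⟩ := Prod.mk.inj (Option.some.inj (hrd.symm.trans hr))
      obtain rfl := hinj hkeven k' hk' (hkl.trans hle) hs
      exact hlegal.d13 hkeven hz l hle hre

theorem two_le_or_of_isLegal (h : Simulates X c e d s) (hc : IsComponentAttack c X θ)
    (hlegal : IsLegal e a k z) : 2 ≤ k ∨ k = 1 ∧ z = false ∧ a = .form θ := by
  by_contra! hcontra
  obtain ⟨hlt, hone⟩ := hcontra
  interval_cases k
  · rcases hlegal.responds with _ | ⟨hr, -⟩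
    · exact hlegal.d13 rfl rfl 1 h.two_le_length (by rw [h.move_one])
    · simp [h.move_zero] at hr
  · rcases hlegal.responds with ⟨hφ, -⟩ | ⟨hr, -, hφ, hdef⟩
    · exact hc.symbolic _ (by simpa [h.move_one] using hφ)
    · obtain rfl : 0 = _ := by simpa [h.move_one] using hr
      obtain rfl : X = _ := by simpa [h.move_zero] using hφ
      rw [h.move_one, hc.defends_iff] at hdef
      exact hone rfl rfl hdef

theorem pWins_of_winsFollowing_simulated {F : List Move → Move} (h : Simulates X c e d (· - 2))
    (hlen : e.length = d.length + 2) (hc : IsComponentAttack c X θ)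
    (he : SDialogueFor NRules X e) (hd : WinsFollowing NRules θ F d) : PWins NRules X e := by
  have push {e d : List Move} (h : Simulates X c e d (· - 2)) (hlen : e.length = d.length + 2)
      {k : ℕ} (hk : 2 ≤ k) (hke : k < e.length) (a : Statement) (z : Bool) :
      Simulates X c (e ++ [⟨a, some (k, z)⟩]) (d ++ [⟨a, some (k - 2, z)⟩]) (· - 2) := by
    have hs := h.append_singleton (by lia) hk hke a z
    rwa [Function.update_eq_self_iff.2 (by simp [hlen])] at hs
  induction hd generalizing e with
  | @opponent d hd hodd _ ih =>
    refine .of_forall_append_singleton he (by lia) fun m hm ↦ ?_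
    obtain ⟨a, k, z, rfl, hlegal⟩ := hm.exists_isLegal he
    have hk : 2 ≤ k := by
      have := hlegal.parity
      rcases h.two_le_or_of_isLegal hc hlegal with hk | ⟨rfl, -⟩ <;> lia
    have hproj := h.isLegal_project (by lia) hc.symbolic hd.1 hk (by lia) hlegal
    exact ih _ (hd.append_of_isLegal hproj) (push h hlen hk hlegal.lt a z) (by simp [hlen]) hm
  | @proponent d hd heven hwin ih =>
    obtain ⟨a, k, z, hm, hlegal⟩ := hwin.sDialogueFor.exists_isLegal hd
    rw [hm] at ih
    have hk := hlegal.lt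
    have hlift : IsLegal e a (k + 2) z :=
      h.isLegal_lift (by lia) (by lia) (by lia) hlegal
    exact .of_append_singleton he (by lia) <| ih (push h hlen (by lia) (by lia) a z)
      (by simp [hlen]) (he.append_of_isLegal hlift)

theorem repeat_opening (h : Simulates X c e d s) (hd : d[0]! = openingMove θ) (hpos : 0 < d.length)
    (heven : e.length % 2 = 0) :
    Simulates X c (e ++ [⟨.form θ, some (1, false)⟩]) d (Function.update s e.length 0) :=
  h.extend List.prefix_rfl hpos (fun i hi hi' ↦ by lia) heven.symm (by rw [hd]) (.inl ⟨rfl, rfl⟩)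

theorem repeat_attack (h : Simulates X c e d s) (hd : d[1]! = ⟨a, some (0, true)⟩)
    (hlen : 1 < d.length) (hodd : e.length % 2 = 1) (hlast : s (e.length - 1) = 0) :
    Simulates X c (e ++ [⟨a, some (e.length - 1, true)⟩]) d (Function.update s e.length 1) := by
  have := h.two_le_length
  refine h.extend List.prefix_rfl hlen (fun i hi hi' ↦ by lia) hodd.symm (by rw [hd])
    (.inr ⟨e.length - 1, true, by lia, by lia, rfl, by rw [hd, hlast]⟩)

theorem isLegal_repeat_attack (h : Simulates X c e d s) (he : IsDialogue e)
    (hd : d[0]! = openingMove θ) (ha : Attacks a θ) (hodd : e.length % 2 = 1)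
    (hlast : s (e.length - 1) = 0) : IsLegal e a (e.length - 1) true where
  lt := by lia
  parity := by lia
  responds := by
    have := h.two_le_length
    refine .attack ?_ ha
    rw [h.stmt (e.length - 1) (by lia) (by lia), hlast, hd]
  d10 heven := by lia
  d13 _ _ i hi hr := by
    have := he.ref_lt hi hr
    lia

theorem pWins_simulated_of_winsFollowing {F : List Move → Move} (h : Simulates X c e d s)
    (hphase : e.length % 2 = d.length % 2 ∨
      e.length % 2 = 1 ∧ d.length % 2 = 0 ∧ s (e.length - 1) = 0)
    (hc : IsComponentAttack c X θ) (hd : SDialogueFor NRules θ d)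
    (he : WinsFollowing NRules X F e) : PWins NRules θ d := by
  have hzero {d : List Move} (hd : SDialogueFor NRules θ d) : d[0]! = openingMove θ := by
    rw [openingMove, ← hd.2.2.2, ← (hd.1.1 hd.2.2.1).1]
  induction he generalizing d s with
  | @opponent e he hodd _ ih =>
    rcases hphase with hpar | ⟨-, hdeven, hlast⟩
    · refine .of_forall_append_singleton hd (hpar ▸ hodd) fun m hm ↦ ?_
      obtain ⟨a, k, z, rfl, hlegal⟩ := hm.exists_isLegal hd
      obtain ⟨j, hj, hje, rfl⟩ := h.surj k hlegal.lt
      exact ih _ (he.append_of_isLegal (h.isLegal_lift hpar hj hje hlegal))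
        (h.append_singleton hpar hj hje a z) (.inl (by grind)) hm
    · have hlen : 1 < d.length := by
        have := hd.2.2.1
        lia
      obtain ⟨a, hone, ha⟩ := hd.exists_opening_attack hlen
      exact ih _ (he.append_of_isLegal (h.isLegal_repeat_attack he.1 (hzero hd) ha hodd hlast))
        (h.repeat_attack hone hlen hodd hlast) (.inl (by grind)) hd
  | @proponent e he heven hwin ih =>
    obtain ⟨a, k, z, hm, hlegal⟩ := hwin.sDialogueFor.exists_isLegal he
    rw [hm] at ih
    have hpar : e.length % 2 = d.length % 2 := by lia
    rcases h.two_le_or_of_isLegal hc hlegal with hk | ⟨rfl, rfl, rfl⟩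
    · have hproj := hd.append_of_isLegal <| h.isLegal_project hpar hc.symbolic hd.1 hk
        (fun hkeven ↦ by have := hlegal.parity; lia) hlegal
      exact .of_append_singleton hd (hpar ▸ heven) <|
        ih (h.append_singleton hpar hk hlegal.lt a z) (.inl (by grind)) hproj
    · exact ih (h.repeat_opening (hzero hd) hd.2.2.1 heven)
        (.inr ⟨by grind, hpar ▸ heven, by simp⟩) hd

theorem start (X θ : Formula) (c : Statement) :
    Simulates X c [openingMove X, ⟨c, some (0, true)⟩, ⟨.form θ, some (1, false)⟩] [openingMove θ]
      (· - 2) := by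
  have h := (nil X c (· - 2)).extend (List.nil_prefix (l := [openingMove θ]))
    (x := ⟨.form θ, some (1, false)⟩) Nat.one_pos (by simp) (by simp) rfl (.inl ⟨rfl, rfl⟩)
  rwa [Function.update_eq_self_iff.2 (by simp)] at h

end Simulates

namespace IsComponentAttack

variable {X θ : Formula} {c : Statement}

theorem isLegal_defense_iff (hc : IsComponentAttack c X θ) {a : Statement} {k : ℕ} {z : Bool} :
    IsLegal [openingMove X, ⟨c, some (0, true)⟩] a k z ↔
      k = 1 ∧ z = false ∧ a = .form θ ∧ ∀ p, θ ≠ .atom p := by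
  constructor
  · intro h
    rcases (Simulates.nil X c id).two_le_or_of_isLegal hc h with hk | ⟨rfl, rfl, rfl⟩
    · exact absurd h.lt hk.not_gt
    · refine ⟨rfl, rfl, rfl, fun p hp ↦ ?_⟩
      obtain ⟨j, hj, hjodd, hjp⟩ := h.d10 (by simp) p (hp ▸ rfl)
      obtain rfl : j = 1 := by
        rw [List.length_cons, List.length_singleton] at hj
        lia
      exact hc.symbolic _ hjp
  · rintro ⟨rfl, rfl, rfl, hθ⟩
    exact ⟨by simp, by simp, .defense rfl Nat.one_pos rfl ((hc.defends_iff _).2 rfl),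
      fun _ p hp ↦ absurd (Statement.form.inj hp) (hθ p), nofun⟩

theorem pWins_iff (hc : IsComponentAttack c X θ) :
    PWins NRules X [openingMove X, ⟨c, some (0, true)⟩] ↔ NValid θ := by
  rw [NValid, sValid_iff_pWins]
  constructor
  · rintro ⟨F, ⟨-, hodd, -⟩ | ⟨he, -, hwin⟩⟩
    · simp at hodd
    · obtain ⟨a, k, z, hm, hlegal⟩ := hwin.sDialogueFor.exists_isLegal he
      obtain ⟨rfl, rfl, rfl, hθ⟩ := hc.isLegal_defense_iff.1 hlegal
      rw [hm] at hwin
      exact (Simulates.start X θ c).pWins_simulated_of_winsFollowing (.inl (by simp)) hc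
        (sDialogueFor_opening_iff.2 hθ) hwin
  · rintro ⟨F, hF⟩
    have hθ := sDialogueFor_opening_iff.1 hF.sDialogueFor
    have he := sDialogueFor_opening_attack hc.attacks
    exact .of_append_singleton he (by simp) <|
      (Simulates.start X θ c).pWins_of_winsFollowing_simulated rfl hc
        (he.append_of_isLegal (hc.isLegal_defense_iff.2 ⟨rfl, rfl, rfl, hθ⟩)) hF

end IsComponentAttack

/-- For all formulas `φ` and `ψ`: `φ ∧ ψ` is N-valid iff both `φ`
and `ψ` are N-valid. -/
theorem conj_N_valid_iff (φ ψ : Formula) :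
    NValid (Formula.conj φ ψ) ↔ NValid φ ∧ NValid ψ := by
  rw [NValid, sValid_iff_pWins, pWins_opening_iff (by simp),
    ← (isComponentAttack_conjL φ ψ).pWins_iff, ← (isComponentAttack_conjR φ ψ).pWins_iff]
  constructor
  · exact fun h ↦ ⟨h _ (.conjL φ ψ), h _ (.conjR φ ψ)⟩
  · rintro ⟨hL, hR⟩ c hc
    cases hc with
    | conjL => exact hL
    | conjR => exact hR
end
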